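/- Let G be a strong tournament of order n ≥ 3. Then for every integer t ≥ 0, the Wiener index of ILTT^t(G) satisfies W(ILTT^t(G)) = 2^{t+1}(2^t − 1)n + 4^t · W(G). -/

import Mathlib

open scoped Classical

noncomputable section

/-- A tournament: a finite directed graph where every pair of distinct nodes
is joined by exactly one arc. -/
structure Tournament where
  V : Type
  [fintypeV : Fintype V]
  [decEqV : DecidableEq V]
  arc : V → V → Prop
  irrefl : ∀ x, ¬ arc x x
  exactlyOne : ∀ x y, x ≠ y → (arc x y ↔ ¬ arc y x)

attribute [instance] Tournament.fintypeV Tournament.decEqV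

namespace Tournament

/-- The ILTT extension: vertices are `V ⊕ V` where `Sum.inl x` is the original
node `x` and `Sum.inr x` is its clone `x'`. -/
def ILTT (T : Tournament) : Tournament where
  V := T.V ⊕ T.V
  arc := fun u v =>
    match u, v with
    | Sum.inl x, Sum.inl y => T.arc x y
    | Sum.inl x, Sum.inr y => T.arc x y
    | Sum.inr x, Sum.inl y => T.arc x y ∨ x = y
    | Sum.inr x, Sum.inr y => T.arc x y
  irrefl := by rintro (x | x) h <;> exact T.irrefl x h
  exactlyOne := by
    rintro (x | x) (y | y) hxy
    · exact T.exactlyOne x y (fun h => hxy (by rw [h]))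
    · by_cases h : x = y
      · subst h; simp [T.irrefl x]
      · have := T.exactlyOne x y h
        simp only [not_or]
        constructor
        · intro ha; exact ⟨this.mp ha, fun h' => h h'.symm⟩
        · intro ha; exact this.mpr ha.1
    · by_cases h : x = y
      · subst h; simp [T.irrefl x]
      · have := T.exactlyOne x y h
        constructor
        · rintro (ha | ha)
          · exact this.mp ha
          · exact absurd ha h
        · intro ha; exact Or.inl (this.mpr ha)
    · exact T.exactlyOne x y (fun h => hxy (by rw [h]))

/-- The dual ILTT extension: identical to `ILTT` except the arcs between
clones are reversed. -/
def ILTTd (T : Tournament) : Tournament where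
  V := T.V ⊕ T.V
  arc := fun u v =>
    match u, v with
    | Sum.inl x, Sum.inl y => T.arc x y
    | Sum.inl x, Sum.inr y => T.arc x y
    | Sum.inr x, Sum.inl y => T.arc x y ∨ x = y
    | Sum.inr x, Sum.inr y => T.arc y x
  irrefl := by rintro (x | x) h <;> exact T.irrefl x h
  exactlyOne := by
    rintro (x | x) (y | y) hxy
    · exact T.exactlyOne x y (fun h => hxy (by rw [h]))
    · by_cases h : x = y
      · subst h; simp [T.irrefl x]
      · have := T.exactlyOne x y h
        simp only [not_or]
        constructor
        · intro ha; exact ⟨this.mp ha, fun h' => h h'.symm⟩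
        · intro ha; exact this.mpr ha.1
    · by_cases h : x = y
      · subst h; simp [T.irrefl x]
      · have := T.exactlyOne x y h
        constructor
        · rintro (ha | ha)
          · exact this.mp ha
          · exact absurd ha h
        · intro ha; exact Or.inl (this.mpr ha)
    · exact T.exactlyOne y x (fun h => hxy (by rw [h]))

/-- A tournament is strong if, for every ordered pair of nodes, there is a
directed path from the first to the second. -/
def Strong (T : Tournament) : Prop := ∀ u v : T.V, Relation.ReflTransGen T.arc u v

/-- `HasWalk T u v n` : there is a directed walk of length `n` from `u` to `v`. -/
def HasWalk (T : Tournament) (u v : T.V) (n : ℕ) : Prop :=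
  ∃ f : Fin (n + 1) → T.V, f 0 = u ∧ f (Fin.last n) = v ∧
    ∀ i : Fin n, T.arc (f i.castSucc) (f i.succ)

/-- The distance from `u` to `v`: the length of a shortest directed path. -/
def dist (T : Tournament) (u v : T.V) : ℕ := sInf {n | HasWalk T u v n}

/-- The diameter: the maximum distance over ordered pairs of distinct nodes. -/
def diam (T : Tournament) : ℕ :=
  (Finset.univ.filter (fun p : T.V × T.V => p.1 ≠ p.2)).sup
    (fun p => T.dist p.1 p.2)

/-- The Wiener index: the sum of distances over ordered pairs of distinct nodes. -/
def wiener (T : Tournament) : ℕ :=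
  ∑ p ∈ Finset.univ.filter (fun p : T.V × T.V => p.1 ≠ p.2), T.dist p.1 p.2

/-- The average distance `L(T) = W(T)/(m(m-1))` where `m` is the order. -/
def avgDist (T : Tournament) : ℝ :=
  (T.wiener : ℝ) / ((Fintype.card T.V : ℝ) * ((Fintype.card T.V : ℝ) - 1))

/-- `J` is a subtournament of `K`. -/
def IsSubtournament (J K : Tournament) : Prop :=
  ∃ f : J.V → K.V, Function.Injective f ∧ ∀ u v : J.V, J.arc u v ↔ K.arc (f u) (f v)

/-- The linear order on `t` nodes. -/
def linearTournament (t : ℕ) : Tournament where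
  V := Fin t
  arc := fun i j => i < j
  irrefl := fun i => lt_irrefl i
  exactlyOne := fun i j h => by
    rw [not_lt]
    exact ⟨le_of_lt, fun hle => hle.lt_of_ne h⟩

/-- A tournament is Hamiltonian if it has a directed cycle through all nodes. -/
def IsHamiltonian (T : Tournament) : Prop :=
  ∃ f : ZMod (Fintype.card T.V) ≃ T.V, ∀ i, T.arc (f i) (f (i + 1))

/-- `S` is an in-dominating set. -/
def InDom (T : Tournament) (S : Finset T.V) : Prop :=
  ∀ u, u ∉ S → ∃ v ∈ S, T.arc u v

/-- `S` is an out-dominating set. -/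
def OutDom (T : Tournament) (S : Finset T.V) : Prop :=
  ∀ u, u ∉ S → ∃ v ∈ S, T.arc v u

/-- The in-domination number. -/
def inDomNum (T : Tournament) : ℕ := sInf {n | ∃ S : Finset T.V, T.InDom S ∧ S.card = n}

/-- The out-domination number. -/
def outDomNum (T : Tournament) : ℕ := sInf {n | ∃ S : Finset T.V, T.OutDom S ∧ S.card = n}

end Tournament

namespace Tournament

theorem hasWalk_zero {T : Tournament} {u v : T.V} : T.HasWalk u v 0 ↔ u = v := by
  constructor
  · rintro ⟨f, h0, h1, -⟩
    exact h0.symm.trans h1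
  · rintro rfl
    exact ⟨fun _ => u, rfl, rfl, fun i => i.elim0⟩

theorem hasWalk_succ {T : Tournament} {u v : T.V} {n : ℕ} :
    T.HasWalk u v (n + 1) ↔ ∃ w, T.arc u w ∧ T.HasWalk w v n := by
  constructor
  · rintro ⟨f, rfl, rfl, h⟩
    exact ⟨f 1, h 0, fun i => f i.succ, rfl, rfl, fun i => h i.succ⟩
  · rintro ⟨w, hw, f, rfl, rfl, h⟩
    refine ⟨Fin.cons u f, rfl, rfl, fun i => ?_⟩
    induction i using Fin.cases with
    | zero => exact hw
    | succ i => exact h i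

theorem exists_hasWalk_of_reflTransGen {T : Tournament} {u v : T.V}
    (h : Relation.ReflTransGen T.arc u v) : ∃ n, T.HasWalk u v n := by
  induction h using Relation.ReflTransGen.head_induction_on with
  | refl => exact ⟨0, hasWalk_zero.2 rfl⟩
  | head hab _ ih =>
    obtain ⟨n, hn⟩ := ih
    exact ⟨n + 1, hasWalk_succ.2 ⟨_, hab, hn⟩⟩

theorem HasWalk.reflTransGen {T : Tournament} {n : ℕ} {u v : T.V} (h : T.HasWalk u v n) :
    Relation.ReflTransGen T.arc u v := by
  induction n generalizing u with
  | zero => rw [hasWalk_zero.1 h]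
  | succ n ih =>
    obtain ⟨w, hw, h⟩ := hasWalk_succ.1 h
    exact .head hw (ih h)

theorem dist_le {T : Tournament} {u v : T.V} {n : ℕ} (h : T.HasWalk u v n) : T.dist u v ≤ n :=
  Nat.sInf_le h

theorem Strong.hasWalk_dist {T : Tournament} (hT : T.Strong) (u v : T.V) :
    T.HasWalk u v (T.dist u v) :=
  Nat.sInf_mem (s := {n | T.HasWalk u v n}) (exists_hasWalk_of_reflTransGen (hT u v))

theorem dist_self (T : Tournament) (u : T.V) : T.dist u u = 0 :=
  Nat.le_zero.1 (dist_le (hasWalk_zero.2 rfl))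

theorem wiener_eq_sum (T : Tournament) : T.wiener = ∑ u, ∑ v, T.dist u v := by
  rw [wiener, Finset.sum_filter, ← Finset.univ_product_univ, Finset.sum_product]
  refine Finset.sum_congr rfl fun u _ => Finset.sum_congr rfl fun v _ => ?_
  by_cases h : u = v
  · simp [h, dist_self]
  · simp [h]

/-- In a strong tournament of order at least two, every node lies on a directed triangle. -/
theorem Strong.hasWalk_three {T : Tournament} (hT : T.Strong) [Nontrivial T.V] (x : T.V) :
    T.HasWalk x x 3 := by
  simp only [hasWalk_succ, hasWalk_zero]
  by_contra hno
  obtain ⟨y, hy⟩ := exists_ne x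
  obtain hxy | ⟨z, hz, -⟩ := (hT x y).cases_head
  · exact hy hxy.symm
  have key : ∀ w, Relation.ReflTransGen T.arc z w → T.arc x w := by
    intro w hw
    induction hw with
    | refl => exact hz
    | @tail a b _ hab ih =>
      have hb : x ≠ b := by
        rintro rfl
        exact (T.exactlyOne x a (fun h => T.irrefl _ (h ▸ ih))).1 ih hab
      by_contra hxb
      exact hno ⟨a, ih, b, hab, x, (T.exactlyOne b x hb.symm).2 hxb, rfl⟩
  exact T.irrefl x (key x (hT z x))

/-- The node of `T` underlying a node or clone of `T.ILTT`. -/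
def base (T : Tournament) : T.ILTT.V → T.V := Sum.elim id id

theorem ILTT_arc_of_arc {T : Tournament} {u v : T.ILTT.V} (h : T.arc (T.base u) (T.base v)) :
    T.ILTT.arc u v := by
  rcases u with x | x <;> rcases v with y | y
  exacts [h, h, Or.inl h, h]

theorem arc_or_eq_of_ILTT_arc {T : Tournament} {u v : T.ILTT.V} (h : T.ILTT.arc u v) :
    T.arc (T.base u) (T.base v) ∨ T.base u = T.base v := by
  rcases u with x | x <;> rcases v with y | y
  exacts [Or.inl h, Or.inl h, h, Or.inl h]

theorem HasWalk.lift {T : Tournament} {n : ℕ} {u v : T.ILTT.V}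
    (h : T.HasWalk (T.base u) (T.base v) n) (hn : n ≠ 0) : T.ILTT.HasWalk u v n := by
  induction n generalizing u with
  | zero => exact absurd rfl hn
  | succ n ih =>
    obtain ⟨w, hw, h⟩ := hasWalk_succ.1 h
    rcases eq_or_ne n 0 with rfl | hn
    · rw [hasWalk_zero] at h
      subst h
      exact hasWalk_succ.2 ⟨v, ILTT_arc_of_arc hw, hasWalk_zero.2 rfl⟩
    · exact hasWalk_succ.2 ⟨Sum.inl w, ILTT_arc_of_arc hw, ih h hn⟩

theorem HasWalk.dist_base_le {T : Tournament} {n : ℕ} {u v : T.ILTT.V}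
    (hT : T.Strong) (h : T.ILTT.HasWalk u v n) : T.dist (T.base u) (T.base v) ≤ n := by
  induction n generalizing u with
  | zero => rw [hasWalk_zero.1 h, dist_self]
  | succ n ih =>
    obtain ⟨w, hw, h⟩ := hasWalk_succ.1 h
    obtain hw | hw := arc_or_eq_of_ILTT_arc hw
    · exact (dist_le (hasWalk_succ.2 ⟨_, hw, hT.hasWalk_dist _ _⟩)).trans
        (Nat.succ_le_succ (ih h))
    · rw [hw]
      exact (ih h).trans n.le_succ

theorem Strong.ILTT {T : Tournament} (hT : T.Strong) [Nontrivial T.V] : T.ILTT.Strong := by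
  intro u v
  obtain ⟨n, h⟩ := exists_hasWalk_of_reflTransGen (hT (T.base u) (T.base v))
  rcases eq_or_ne n 0 with rfl | hn
  · have h3 := hT.hasWalk_three (T.base u)
    nth_rewrite 2 [hasWalk_zero.1 h] at h3
    exact (h3.lift three_ne_zero).reflTransGen
  · exact (h.lift hn).reflTransGen

theorem Strong.dist_ILTT {T : Tournament} (hT : T.Strong) [Nontrivial T.V] {u v : T.ILTT.V}
    (h : T.base u ≠ T.base v) : T.ILTT.dist u v = T.dist (T.base u) (T.base v) := by
  refine le_antisymm (dist_le ((hT.hasWalk_dist _ _).lift fun h0 => h ?_))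
    ((hT.ILTT.hasWalk_dist u v).dist_base_le hT)
  exact hasWalk_zero.1 (h0 ▸ hT.hasWalk_dist _ _)

theorem dist_ILTT_clone_self (T : Tournament) (x : T.V) :
    T.ILTT.dist (Sum.inr x) (Sum.inl x) = 1 := by
  refine le_antisymm
    (dist_le (hasWalk_succ.2 ⟨Sum.inl x, Or.inr rfl, hasWalk_zero.2 rfl⟩)) ?_
  refine le_csInf ⟨1, hasWalk_succ.2 ⟨Sum.inl x, Or.inr rfl, hasWalk_zero.2 rfl⟩⟩ fun n hn => ?_
  rcases n with _ | n
  · exact nomatch hasWalk_zero.1 hn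
  · exact Nat.le_add_left 1 n

theorem Strong.dist_ILTT_self_clone {T : Tournament} (hT : T.Strong) [Nontrivial T.V]
    (x : T.V) : T.ILTT.dist (Sum.inl x) (Sum.inr x) = 3 := by
  have h3 : T.ILTT.HasWalk (Sum.inl x) (Sum.inr x) 3 :=
    HasWalk.lift (hT.hasWalk_three x) three_ne_zero
  refine le_antisymm (dist_le h3) (le_csInf ⟨3, h3⟩ fun n hn => ?_)
  have not_two_cycle : ∀ a, T.arc x a → ¬ T.arc a x := fun a h =>
    (T.exactlyOne x a fun hxa => T.irrefl a (hxa ▸ h)).1 h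
  match n, hn with
  | 0, hn => exact nomatch hasWalk_zero.1 hn
  | 1, hn =>
    obtain ⟨w, hw, h⟩ := hasWalk_succ.1 hn
    obtain rfl := hasWalk_zero.1 h
    exact (T.irrefl x hw).elim
  | 2, hn =>
    obtain ⟨w, hw, h⟩ := hasWalk_succ.1 hn
    obtain ⟨z, hz, h⟩ := hasWalk_succ.1 h
    obtain rfl := hasWalk_zero.1 h
    rcases w with a | a <;> exact (not_two_cycle a hw hz).elim
  | n + 3, _ => exact Nat.le_add_left 3 n

theorem card_ILTT (T : Tournament) : Fintype.card T.ILTT.V = 2 * Fintype.card T.V := by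
  rw [two_mul]
  exact Fintype.card_sum

theorem Strong.wiener_ILTT {T : Tournament} (hT : T.Strong) [Nontrivial T.V] :
    T.ILTT.wiener = 4 * Fintype.card T.V + 4 * T.wiener := by
  have hll (x y : T.V) : T.ILTT.dist (Sum.inl x) (Sum.inl y) = T.dist x y := by
    rcases eq_or_ne x y with rfl | h
    · exact (dist_self _ _).trans (dist_self _ _).symm
    · exact hT.dist_ILTT h
  have hrr (x y : T.V) : T.ILTT.dist (Sum.inr x) (Sum.inr y) = T.dist x y := by
    rcases eq_or_ne x y with rfl | h
    · exact (dist_self _ _).trans (dist_self _ _).symm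
    · exact hT.dist_ILTT h
  have hlr (x y : T.V) :
      T.ILTT.dist (Sum.inl x) (Sum.inr y) = T.dist x y + if x = y then 3 else 0 := by
    rcases eq_or_ne x y with rfl | h
    · simp [dist_self, hT.dist_ILTT_self_clone]
    · rw [if_neg h]
      exact hT.dist_ILTT h
  have hrl (x y : T.V) :
      T.ILTT.dist (Sum.inr x) (Sum.inl y) = T.dist x y + if x = y then 1 else 0 := by
    rcases eq_or_ne x y with rfl | h
    · simp [dist_self, dist_ILTT_clone_self]
    · rw [if_neg h]
      exact hT.dist_ILTT h
  have hsum (f : T.ILTT.V → ℕ) : ∑ u, f u = ∑ x : T.V, f (Sum.inl x) + ∑ x : T.V, f (Sum.inr x) :=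
    Fintype.sum_sum_type f
  simp only [wiener_eq_sum, hsum, hll, hrr, hlr, hrl, Finset.sum_add_distrib,
    Finset.sum_ite_eq, Finset.mem_univ, if_true, Finset.sum_const, Finset.card_univ, smul_eq_mul]
  ring

end Tournament

open Tournament

/-- For a strong tournament `G` of order `n ≥ 3` and every `t ≥ 0`,
`W(ILTT^t(G)) = 2^(t+1)(2^t - 1)n + 4^t·W(G)`. -/
theorem stmt7 (G : Tournament) (n : ℕ) (hn : Fintype.card G.V = n)
    (hcard : 3 ≤ n) (hG : G.Strong) :
    ∀ t : ℕ, (Tournament.ILTT^[t] G).wiener =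
      2 ^ (t + 1) * (2 ^ t - 1) * n + 4 ^ t * G.wiener := by
  intro t
  induction t generalizing G n with
  | zero => simp
  | succ t ih =>
    have : Nontrivial G.V := Fintype.one_lt_card_iff_nontrivial.1 (by omega)
    rw [Function.iterate_succ_apply,
      ih G.ILTT (2 * n) (by rw [card_ILTT, hn]) (by omega) hG.ILTT, hG.wiener_ILTT, hn]
    obtain ⟨k, hk⟩ := Nat.exists_eq_add_of_le (Nat.one_le_two_pow (n := t))
    have h4 : 4 ^ t = 2 ^ t * 2 ^ t := by rw [← mul_pow]; norm_num
    have hsub : 2 * (1 + k) - 1 = 2 * k + 1 := by omega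
    rw [pow_succ 4, h4, pow_succ' 2 (t + 1), pow_succ' 2 t, hk, hsub, Nat.add_sub_cancel_left]
    ring
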